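/- The elliptic curve E: y² = x³ − 3483x + 121014 defined over ℚ has a ℚ-rational torsion point of exact order 7. -/

import Mathlib

open WeierstrassCurve

noncomputable section

/-!
Doubling `P = (27, 216)` three times along tangent lines, of slopes `-3`, `-3` and `15`, gives
`P ↦ (-45, -432) ↦ (99, 864) ↦ P`. Thus `8 • P = P`, so `7 • P = 0` while `P ≠ 0`, and `7` is prime.
-/

theorem addOrderOf_eq_prime_of_succ_nsmul_eq_self {M : Type*} [AddMonoid M] [IsRightCancelAdd M]
    {p : ℕ} [Fact p.Prime] {a : M} (h : (p + 1) • a = a) (ha : a ≠ 0) : addOrderOf a = p :=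
  addOrderOf_eq_prime (add_eq_right.mp ((succ_nsmul a p).symm.trans h)) ha

section Doubling

variable {F : Type*} [Field F] [DecidableEq F] {W : Affine F} {x y ℓ : F}

theorem slope_self_eq_of_mul_eq (hy : y ≠ W.negY x y)
    (hℓ : ℓ * (y - W.negY x y) = 3 * x ^ 2 + 2 * W.a₂ * x + W.a₄ - W.a₁ * y) :
    W.slope x x y y = ℓ := by
  rw [Affine.slope_of_Y_ne rfl hy, div_eq_iff (sub_ne_zero.mpr hy), hℓ]

theorem two_nsmul_some_eq_some {x' y' : F} {h : W.Nonsingular x y} {h' : W.Nonsingular x' y'}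
    (hy : y ≠ W.negY x y)
    (hℓ : ℓ * (y - W.negY x y) = 3 * x ^ 2 + 2 * W.a₂ * x + W.a₄ - W.a₁ * y)
    (hx' : W.addX x x ℓ = x') (hy' : W.addY x x y ℓ = y') :
    2 • Affine.Point.some x y h = Affine.Point.some x' y' h' := by
  subst hx' hy'
  simp only [two_nsmul, Affine.Point.add_self_of_Y_ne hy, slope_self_eq_of_mul_eq hy hℓ]

end Doubling

/-- The short Weierstrass model `y² = x³ − 27 c₄ x − 54 c₆` of the curve
`y² + xy + y = x³ − x² − 3x + 3` (Cremona label `26b1`), for which `c₄ = 129` and `c₆ = -2241`. -/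
abbrev curve26b1 : WeierstrassCurve ℚ :=
  { a₁ := 0, a₂ := 0, a₃ := 0, a₄ := -3483, a₆ := 121014 }

instance curve26b1_isElliptic : curve26b1.IsElliptic where
  isUnit := by
    rw [isUnit_iff_ne_zero]
    norm_num [WeierstrassCurve.Δ, b₂, b₄, b₆, b₈]

theorem curve26b1_nonsingular {x y : ℚ} (h : y ^ 2 = x ^ 3 - 3483 * x + 121014) :
    curve26b1.toAffine.Nonsingular x y := by
  rw [← Affine.equation_iff_nonsingular, Affine.equation_iff]
  linear_combination h

/-- The elliptic curve `E : y² = x³ − 3483x + 121014` over `ℚ` has a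
`ℚ`-rational torsion point of exact order `7`. -/
theorem exists_rational_point_of_order_seven :
    ∃ P : WeierstrassCurve.Affine.Point
      ({ a₁ := 0, a₂ := 0, a₃ := 0, a₄ := -3483, a₆ := 121014 } : WeierstrassCurve ℚ).toAffine,
      addOrderOf P = 7 := by
  let P : curve26b1.toAffine.Point := .some 27 216 (curve26b1_nonsingular (by norm_num))
  let Q : curve26b1.toAffine.Point := .some (-45) (-432) (curve26b1_nonsingular (by norm_num))
  let R : curve26b1.toAffine.Point := .some 99 864 (curve26b1_nonsingular (by norm_num))
  have two_P : 2 • P = Q := by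
    apply two_nsmul_some_eq_some (ℓ := -3) <;>
      norm_num [Affine.negY, Affine.addX, Affine.addY, Affine.negAddY]
  have two_Q : 2 • Q = R := by
    apply two_nsmul_some_eq_some (ℓ := -3) <;>
      norm_num [Affine.negY, Affine.addX, Affine.addY, Affine.negAddY]
  have two_R : 2 • R = P := by
    apply two_nsmul_some_eq_some (ℓ := 15) <;>
      norm_num [Affine.negY, Affine.addX, Affine.addY, Affine.negAddY]
  have eight_P : (2 * 2 * 2) • P = P := by rw [mul_smul, mul_smul, two_P, two_Q, two_R]
  have : Fact (Nat.Prime 7) := ⟨by norm_num⟩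
  exact ⟨P, addOrderOf_eq_prime_of_succ_nsmul_eq_self eight_P (Affine.Point.some_ne_zero _)⟩

end
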